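/- Let 1/2 < γ ≤ 1, let Ω ⊆ ℝ^m be open, and let f : Ω → ℝ^{2n+1} be locally γ-Hölder continuous with respect to the Euclidean metrics. Then f is locally γ-Hölder continuous as a map into ℍ^n (with respect to the Korányi metric) if and only if f^*α = 0 in the distributional sense, i.e. for every smooth compactly supported vector field Φ : Ω → ℝ^m one has lim_{ε→0+} ∫_Ω ⟨(f_ε^*α)(x), Φ(x)⟩ dx = 0, where f_ε = f * η_ε is the standard ε-mollification of f (the integrals being defined for all ε smaller than the distance from the support of Φ to the complement of Ω). -/

import Mathlib

open Metric Set MeasureTheory Topology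

/-- The index of the coordinate `x_j` in `ℝ^{2n+1}`. -/
def xI (n : ℕ) (j : Fin n) : Fin (2*n+1) := ⟨2*j.1, by have := j.2; omega⟩

/-- The index of the coordinate `y_j` in `ℝ^{2n+1}`. -/
def yI (n : ℕ) (j : Fin n) : Fin (2*n+1) := ⟨2*j.1+1, by have := j.2; omega⟩

/-- The index of the coordinate `t` in `ℝ^{2n+1}`. -/
def tI (n : ℕ) : Fin (2*n+1) := Fin.last (2*n)

/-- The Korányi metric on the Heisenberg group `ℍ^n = ℝ^{2n+1}`:
`d_K(p,q) = (|z-z'|^4 + |t - t' + 2 ∑_j (x_j' y_j - x_j y_j')|^2)^{1/4}`. -/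
noncomputable def dK (n : ℕ) (p q : EuclideanSpace ℝ (Fin (2*n+1))) : ℝ :=
  ((∑ i : Fin (2*n), (p (Fin.castSucc i) - q (Fin.castSucc i)) ^ 2) ^ 2 +
    (p (tI n) - q (tI n) +
      2 * ∑ j : Fin n, (q (xI n j) * p (yI n j) - p (xI n j) * q (yI n j))) ^ 2) ^ ((1:ℝ)/4)

/-- The Euclidean distance between the projections of `p, q ∈ ℝ^{2n+1}` onto the first
`2n` coordinates. -/
noncomputable def edistProj (n : ℕ) (p q : EuclideanSpace ℝ (Fin (2*n+1))) : ℝ :=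
  Real.sqrt (∑ i : Fin (2*n), (p (Fin.castSucc i) - q (Fin.castSucc i)) ^ 2)

/-- The `ε`-mollification `f_ε = f * η_ε` of `f`, where `η_ε(z) = ε^{-m} η(z/ε)`. -/
noncomputable def mollify (m d : ℕ) (η : EuclideanSpace ℝ (Fin m) → ℝ) (ε : ℝ)
    (f : EuclideanSpace ℝ (Fin m) → EuclideanSpace ℝ (Fin d))
    (p : EuclideanSpace ℝ (Fin m)) : EuclideanSpace ℝ (Fin d) :=
  ∫ z, ((ε ^ m)⁻¹ * η (ε⁻¹ • z)) • f (p - z)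

/-- The pullback `g^*α` of the standard contact form
`α = dt + 2 ∑_j (x_j dy_j - y_j dx_j)`, identified with the `ℝ^m`-valued map
`g^*α(p) = ∇g^t(p) + 2 ∑_j (g^{x_j}(p)·∇g^{y_j}(p) - g^{y_j}(p)·∇g^{x_j}(p))`. -/
noncomputable def pullA (n m : ℕ)
    (g : EuclideanSpace ℝ (Fin m) → EuclideanSpace ℝ (Fin (2*n+1)))
    (p : EuclideanSpace ℝ (Fin m)) : EuclideanSpace ℝ (Fin m) :=
  gradient (fun q => g q (tI n)) p +
    (2:ℝ) • ∑ j : Fin n,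
      (g p (xI n j) • gradient (fun q => g q (yI n j)) p -
        g p (yI n j) • gradient (fun q => g q (xI n j)) p)

open scoped RealInnerProductSpace

/-!
Write `α` for the contact form. Up to constants, `d_K(p, q)` is the larger of the horizontal part
of `|p - q|` and `|α_p(q - p)|^{1/2}`, so for a Euclidean `γ`-Hölder map being Hölder into `ℍ^n`
means the vertical estimate `|α_{f(x)}(f(y) - f(x))| ≤ C |x - y|^{2γ}`. Since `α` is Lipschitz and
`2γ > 1`, the sewing argument of Young integration shows that for a smooth map `g` the quantity
`α_{g(x)}(g(y) - g(x))` differs from the integral of `g^*α` over `[x, y]` by at most a multiple of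
`|x - y|^{2γ}`, with a constant depending only on the `γ`-Hölder constant of `g`; it is therefore
uniform over the mollifications `f_ε`.

If the vertical estimate holds, then `f_ε^*α = O(ε^{2γ-1})` locally uniformly, hence it tends to
`0` in the sense of distributions. Conversely, if `f_ε^*α → 0` in the sense of distributions, then
averaging the sewing estimate over `x` in a small ball turns the integrals of `f_ε^*α` over
segments into integrals against a test function, which disappear as `ε → 0`; shrinking the ball
leaves the vertical estimate.
-/

open Filter ContinuousLinearMap
open scoped Convolution NNReal

section Sewing

/-- The constant `∑ₖ 2 ^ (k (1 - p))` in the sewing estimate with exponent `p > 1`. -/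
noncomputable def sewingConst (p : ℝ) : ℝ := (1 - 2 ^ (1 - p))⁻¹

theorem two_rpow_one_sub_lt_one {p : ℝ} (hp : 1 < p) : (2 : ℝ) ^ (1 - p) < 1 :=
  Real.rpow_lt_one_of_one_lt_of_neg one_lt_two (by linarith)

theorem sewingConst_nonneg {p : ℝ} (hp : 1 < p) : 0 ≤ sewingConst p :=
  inv_nonneg.2 (sub_nonneg.2 (two_rpow_one_sub_lt_one hp).le)

theorem one_add_two_rpow_mul_sewingConst {p : ℝ} (hp : 1 < p) :
    1 + 2 ^ (1 - p) * sewingConst p = sewingConst p := by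
  have h : (1 : ℝ) - 2 ^ (1 - p) ≠ 0 := (sub_pos.2 (two_rpow_one_sub_lt_one hp)).ne'
  rw [sewingConst]
  field_simp
  ring

theorem two_mul_half_rpow {d : ℝ} (hd : 0 ≤ d) (p : ℝ) :
    2 * (2⁻¹ * d) ^ p = 2 ^ (1 - p) * d ^ p := by
  rw [Real.mul_rpow (by norm_num) hd, Real.inv_rpow zero_le_two, Real.rpow_sub two_pos,
    Real.rpow_one]
  ring

variable {E F : Type*} [NormedAddCommGroup E] [NormedSpace ℝ E] [NormedAddCommGroup F]

-- Each dyadic subdivision sums one more term of the geometric series, and divides the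
-- qualitative bound `M * dist x y ^ q` by `2 ^ (q - 1)`.
theorem norm_le_sewingConst_add {R : E → E → F} {p q D M : ℝ} (hp : 1 < p)
    (hdefect : ∀ x y, ‖R x y - R x (midpoint ℝ x y) - R (midpoint ℝ x y) y‖ ≤ D * dist x y ^ p)
    (hsmall : ∀ x y, ‖R x y‖ ≤ M * dist x y ^ q) (j : ℕ) (x y : E) :
    ‖R x y‖ ≤ sewingConst p * D * dist x y ^ p + M * (2 ^ (1 - q)) ^ j * dist x y ^ q := by
  induction j generalizing x y with
  | zero =>
    have hD : 0 ≤ D * dist x y ^ p := (norm_nonneg _).trans (hdefect x y)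
    have := mul_nonneg (sewingConst_nonneg hp) hD
    linarith [hsmall x y]
  | succ j ih =>
    have hl := ih x (midpoint ℝ x y)
    have hr := ih (midpoint ℝ x y) y
    rw [dist_left_midpoint, Real.norm_two] at hl
    rw [dist_midpoint_right, Real.norm_two] at hr
    have hsplit : R x y = (R x y - R x (midpoint ℝ x y) - R (midpoint ℝ x y) y) +
        R x (midpoint ℝ x y) + R (midpoint ℝ x y) y := by abel
    calc ‖R x y‖
        ≤ D * dist x y ^ p + ‖R x (midpoint ℝ x y)‖ + ‖R (midpoint ℝ x y) y‖ := by
          rw [hsplit]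
          exact norm_add₃_le.trans (by gcongr; exact hdefect x y)
      _ ≤ D * dist x y ^ p + sewingConst p * D * (2 * (2⁻¹ * dist x y) ^ p) +
            M * (2 ^ (1 - q)) ^ j * (2 * (2⁻¹ * dist x y) ^ q) := by linarith
      _ = (1 + 2 ^ (1 - p) * sewingConst p) * D * dist x y ^ p +
            M * (2 ^ (1 - q)) ^ (j + 1) * dist x y ^ q := by
          rw [two_mul_half_rpow dist_nonneg, two_mul_half_rpow dist_nonneg]
          ring
      _ = _ := by rw [one_add_two_rpow_mul_sewingConst hp]

theorem norm_le_sewingConst_mul {R : E → E → F} {p q D M : ℝ} (hp : 1 < p) (hq : 1 < q)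
    (hdefect : ∀ x y, ‖R x y - R x (midpoint ℝ x y) - R (midpoint ℝ x y) y‖ ≤ D * dist x y ^ p)
    (hsmall : ∀ x y, ‖R x y‖ ≤ M * dist x y ^ q) (x y : E) :
    ‖R x y‖ ≤ sewingConst p * D * dist x y ^ p := by
  have hlim : Tendsto
      (fun j : ℕ => sewingConst p * D * dist x y ^ p + M * (2 ^ (1 - q)) ^ j * dist x y ^ q)
      atTop (𝓝 (sewingConst p * D * dist x y ^ p + M * 0 * dist x y ^ q)) :=
    (((tendsto_pow_atTop_nhds_zero_of_lt_one (by positivity)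
      (two_rpow_one_sub_lt_one hq)).const_mul M).mul_const _).const_add _
  simpa using ge_of_tendsto' hlim fun j => norm_le_sewingConst_add hp hdefect hsmall j x y

end Sewing

section Curves

variable {V W : Type*} [NormedAddCommGroup V] [NormedSpace ℝ V] [NormedAddCommGroup W]
  [NormedSpace ℝ W] {α : V → V →L[ℝ] W} {Λ L M γ : ℝ≥0} {c : ℝ → V}

/-- The error made when the line integral of the `1`-form `α` along the curve `c` between the
times `a` and `b` is replaced by the value of `α` at the initial point on the chord. -/
noncomputable def chordError (α : V → V →L[ℝ] W) (c : ℝ → V) (a b : ℝ) : W :=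
  α (c a) (c b - c a) - ∫ s in a..b, α (c s) (deriv c s)

theorem norm_form_sub_apply_le (hα : LipschitzWith Λ α) (p q w : V) :
    ‖(α p - α q) w‖ ≤ Λ * dist p q * ‖w‖ :=
  (le_opNorm _ _).trans (by gcongr; simpa [dist_eq_norm] using hα.dist_le_mul p q)

theorem continuous_form_deriv (hα : Continuous α) (hc : ContDiff ℝ 1 c) :
    Continuous fun s => α (c s) (deriv c s) :=
  (hα.comp hc.continuous).clm_apply (hc.continuous_deriv le_rfl)

theorem chordError_sub_sub (hα : Continuous α) (hc : ContDiff ℝ 1 c) (a b d : ℝ) :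
    chordError α c a b - chordError α c a d - chordError α c d b =
      (α (c a) - α (c d)) (c b - c d) := by
  have hint := (continuous_form_deriv hα hc).intervalIntegrable (μ := volume)
  rw [chordError, chordError, chordError,
    ← intervalIntegral.integral_add_adjacent_intervals (hint a d) (hint d b)]
  simp only [sub_apply, map_sub]
  abel

variable [CompleteSpace W]

theorem chordError_eq_integral (hα : Continuous α) (hc : ContDiff ℝ 1 c) (a b : ℝ) :
    chordError α c a b = ∫ s in a..b, (α (c a) - α (c s)) (deriv c s) := by
  have hconst : Continuous fun s => α (c a) (deriv c s) :=
    (α (c a)).continuous.comp (hc.continuous_deriv le_rfl)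
  have hftc : ∫ s in a..b, α (c a) (deriv c s) = α (c a) (c b - c a) := by
    rw [map_sub]
    exact intervalIntegral.integral_eq_sub_of_hasDerivAt
      (fun s _ => (α (c a)).hasFDerivAt.comp_hasDerivAt s
        (hc.differentiable one_ne_zero s).hasDerivAt)
      (hconst.intervalIntegrable a b)
  simp only [sub_apply]
  rw [intervalIntegral.integral_sub (hconst.intervalIntegrable a b)
    ((continuous_form_deriv hα hc).intervalIntegrable a b), hftc, chordError]

theorem norm_chordError_le_sq (hα : LipschitzWith Λ α) (hc : ContDiff ℝ 1 c)
    (hM : LipschitzWith M c) (a b : ℝ) :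
    ‖chordError α c a b‖ ≤ Λ * M ^ 2 * dist a b ^ (2 : ℝ) := by
  rw [chordError_eq_integral hα.continuous hc]
  refine (intervalIntegral.norm_integral_le_of_norm_le_const
    (C := Λ * (M * dist a b) * M) fun s hs => ?_).trans_eq ?_
  · have has : dist a s ≤ dist a b :=
      Real.dist_left_le_of_mem_uIcc (uIoc_subset_uIcc hs)
    refine (norm_form_sub_apply_le hα _ _ _).trans ?_
    gcongr
    · exact (hM.dist_le_mul a s).trans (by gcongr)
    · exact norm_deriv_le_of_lipschitz hM
  · rw [← Real.dist_eq, dist_comm b a, Real.rpow_two]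
    ring

theorem norm_chordError_le (hγ : 1 < 2 * (γ : ℝ)) (hα : LipschitzWith Λ α)
    (hc : ContDiff ℝ 1 c) (hM : LipschitzWith M c) (hL : HolderWith L γ c) (a b : ℝ) :
    ‖chordError α c a b‖ ≤ sewingConst (2 * γ) * (Λ * L ^ 2) * dist a b ^ (2 * (γ : ℝ)) := by
  refine norm_le_sewingConst_mul hγ one_lt_two (fun a b => ?_)
    (norm_chordError_le_sq hα hc hM) a b
  have hleft : dist a (midpoint ℝ a b) ≤ dist a b := by
    rw [dist_left_midpoint, Real.norm_two]
    linarith [dist_nonneg (x := a) (y := b)]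
  have hright : dist b (midpoint ℝ a b) ≤ dist a b := by
    rw [dist_right_midpoint, Real.norm_two]
    linarith [dist_nonneg (x := a) (y := b)]
  calc _ ≤ Λ * dist (c a) (c (midpoint ℝ a b)) * dist (c b) (c (midpoint ℝ a b)) := by
        rw [chordError_sub_sub hα.continuous hc, dist_eq_norm (c b)]
        exact norm_form_sub_apply_le hα _ _ _
    _ ≤ Λ * (L * dist a b ^ (γ : ℝ)) * (L * dist a b ^ (γ : ℝ)) := by
        gcongr
        · exact (hL.dist_le _ _).trans (by gcongr)
        · exact (hL.dist_le _ _).trans (by gcongr)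
    _ = Λ * L ^ 2 * dist a b ^ (2 * (γ : ℝ)) := by
        rw [mul_comm 2 (γ : ℝ), Real.rpow_mul dist_nonneg, Real.rpow_two]
        ring

end Curves

section Pullback

variable {E V W : Type*} [NormedAddCommGroup E] [NormedSpace ℝ E] [NormedAddCommGroup V]
  [NormedSpace ℝ V] [NormedAddCommGroup W] [NormedSpace ℝ W] {α : V → V →L[ℝ] W}
  {G : E → V} {Λ M H γ : ℝ≥0}

/-- The pullback `G^*α` of a `1`-form `α` by a differentiable map `G`. -/
noncomputable def formPullback (α : V → V →L[ℝ] W) (G : E → V) (x : E) : E →L[ℝ] W :=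
  (α (G x)).comp (fderiv ℝ G x)

theorem continuous_formPullback (hα : Continuous α) (hG : ContDiff ℝ 1 G) :
    Continuous (formPullback α G) :=
  (hα.comp hG.continuous).clm_comp (hG.continuous_fderiv one_ne_zero)

theorem deriv_comp_add_smul (hG : Differentiable ℝ G) (x v : E) (s : ℝ) :
    deriv (fun s : ℝ => G (x + s • v)) s = fderiv ℝ G (x + s • v) v := by
  have hline : HasDerivAt (fun s : ℝ => x + s • v) v s := by
    simpa using ((hasDerivAt_id s).smul_const v).const_add x
  exact ((hG _).hasFDerivAt.comp_hasDerivAt s hline).deriv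

theorem lipschitzWith_add_smul (x v : E) : LipschitzWith ‖v‖₊ fun s : ℝ => x + s • v :=
  LipschitzWith.of_dist_le_mul fun s t => by
    rw [dist_add_left, dist_eq_norm, ← sub_smul, norm_smul, ← dist_eq_norm, coe_nnnorm, mul_comm]

theorem norm_sub_integral_formPullback_le [CompleteSpace W] (hγ : 1 < 2 * (γ : ℝ))
    (hα : LipschitzWith Λ α) (hG : ContDiff ℝ 1 G) (hM : LipschitzWith M G)
    (hH : HolderWith H γ G) (x v : E) :
    ‖α (G x) (G (x + v) - G x) - ∫ s in (0 : ℝ)..1, formPullback α G (x + s • v) v‖ ≤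
      sewingConst (2 * γ) * (Λ * H ^ 2) * ‖v‖ ^ (2 * (γ : ℝ)) := by
  have hc : ContDiff ℝ 1 fun s : ℝ => G (x + s • v) := hG.comp (by fun_prop)
  have hline := lipschitzWith_add_smul x v
  have hL : HolderWith (H * ‖v‖₊ ^ (γ : ℝ)) γ fun s : ℝ => G (x + s • v) := by
    simpa [Function.comp_def] using hH.comp hline.holderWith
  have h := norm_chordError_le hγ hα hc (hM.comp hline) hL 0 1
  simp only [chordError, zero_smul, add_zero, one_smul, dist_zero_left, norm_one, Real.one_rpow,
    mul_one, deriv_comp_add_smul (hG.differentiable one_ne_zero)] at h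
  refine h.trans_eq ?_
  rw [NNReal.coe_mul, NNReal.coe_rpow, coe_nnnorm, mul_pow, mul_comm 2 (γ : ℝ),
    Real.rpow_mul (norm_nonneg v), Real.rpow_two]
  ring

end Pullback

theorem holderWith_of_dist_le {X Y : Type*} [PseudoMetricSpace X] [PseudoMetricSpace Y]
    {C γ : ℝ≥0} {f : X → Y} (h : ∀ x y, dist (f x) (f y) ≤ C * dist x y ^ (γ : ℝ)) :
    HolderWith C γ f := fun x y => by
  rw [edist_nndist, edist_nndist, ← ENNReal.coe_rpow_of_nonneg _ γ.coe_nonneg,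
    ← ENNReal.coe_mul, ENNReal.coe_le_coe, ← NNReal.coe_le_coe]
  simpa using h x y

section Mollification

variable {E : Type*} [NormedAddCommGroup E] [NormedSpace ℝ E] [MeasurableSpace E]
  {μ : Measure E} {k : E → ℝ} {r : ℝ}

/-- A smooth nonnegative kernel of total mass one supported in the open ball of radius `r` about
the origin. -/
structure IsMollifier (μ : Measure E) (k : E → ℝ) (r : ℝ) : Prop where
  contDiff : ContDiff ℝ (⊤ : ℕ∞) k
  support_subset : Function.support k ⊆ ball 0 r
  nonneg : ∀ z, 0 ≤ k z
  integral_eq_one : ∫ z, k z ∂μ = 1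

/-- The kernel `z ↦ ε⁻ᵐ k(z / ε)`, with `m` the dimension of the space. -/
noncomputable def rescaledKernel (k : E → ℝ) (ε : ℝ) (z : E) : ℝ :=
  (ε ^ Module.finrank ℝ E)⁻¹ * k (ε⁻¹ • z)

theorem integral_inv_pow_mul_comp_inv_smul [FiniteDimensional ℝ E] [BorelSpace E]
    [μ.IsAddHaarMeasure] {ε : ℝ} (hε : 0 < ε) (u : E → ℝ) :
    ∫ z, (ε ^ Module.finrank ℝ E)⁻¹ * u (ε⁻¹ • z) ∂μ = ∫ z, u z ∂μ := by
  rw [integral_const_mul, Measure.integral_comp_inv_smul_of_nonneg _ _ hε.le, smul_eq_mul,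
    inv_mul_cancel_left₀ (by positivity)]

namespace IsMollifier

theorem of_support_subset_closedBall (hk : ContDiff ℝ (⊤ : ℕ∞) k) (hr : r ≠ 0)
    (hsupp : Function.support k ⊆ closedBall 0 r) (hk₀ : ∀ z, 0 ≤ k z)
    (hk₁ : ∫ z, k z ∂μ = 1) : IsMollifier μ k r where
  contDiff := hk
  support_subset := interior_closedBall (0 : E) hr ▸
    interior_maximal hsupp hk.continuous.isOpen_support
  nonneg := hk₀
  integral_eq_one := hk₁

theorem continuous_fderiv (hk : IsMollifier μ k r) : Continuous (fderiv ℝ k) :=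
  hk.contDiff.continuous_fderiv (by simp)

theorem support_fderiv_subset (hk : IsMollifier μ k r) :
    Function.support (fderiv ℝ k) ⊆ closedBall 0 r :=
  (_root_.support_fderiv_subset ℝ).trans
    (closure_minimal (hk.support_subset.trans ball_subset_closedBall) isClosed_closedBall)

variable {F G : Type*} [NormedAddCommGroup F] [NormedSpace ℝ F] [NormedAddCommGroup G]
  [NormedSpace ℝ G] {g : E → F} {H γ : ℝ≥0}

theorem convolution_eventuallyEq {f : E → F} {δ : ℝ} (hk : IsMollifier μ k r) (hδ : r < δ) {x : E}
    (hfg : EqOn f g (ball x δ)) :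
    k ⋆[lsmul ℝ ℝ, μ] f =ᶠ[𝓝 x] k ⋆[lsmul ℝ ℝ, μ] g := by
  filter_upwards [ball_mem_nhds x (sub_pos.2 hδ)] with q hq
  refine integral_congr_ae (.of_forall fun z => ?_)
  by_cases hz : z ∈ ball 0 r
  · have hqz : q - z ∈ ball x δ := by
      have hdist : dist (q - z) q = ‖z‖ := by simp
      rw [mem_ball_zero_iff] at hz
      rw [mem_ball] at hq ⊢
      linarith [dist_triangle (q - z) q x]
    simp only [hfg hqz]
  · have hz₀ : k z = 0 := Function.notMem_support.1 fun h => hz (hk.support_subset h)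
    simp [hz₀]

variable [FiniteDimensional ℝ E]

theorem hasCompactSupport (hk : IsMollifier μ k r) : HasCompactSupport k :=
  .of_support_subset_isCompact (isCompact_closedBall 0 r)
    (hk.support_subset.trans ball_subset_closedBall)

variable [BorelSpace E]

section IsFiniteMeasureOnCompacts

variable [IsFiniteMeasureOnCompacts μ]

theorem integrable_norm_fderiv (hk : IsMollifier μ k r) :
    Integrable (fun z => ‖fderiv ℝ k z‖) μ :=
  (hk.continuous_fderiv.integrable_of_hasCompactSupport (hk.hasCompactSupport.fderiv ℝ)).norm

theorem integrable_fderiv_smul (hk : IsMollifier μ k r) (hg : Continuous g) (v : E) :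
    Integrable (fun z => fderiv ℝ k z v • g z) μ :=
  ((hk.continuous_fderiv.clm_apply continuous_const).smul hg).integrable_of_hasCompactSupport
    ((hk.hasCompactSupport.fderiv_apply ℝ v).smul_right)

theorem integrable_smul (hk : IsMollifier μ k r) (hg : Continuous g) :
    Integrable (fun z => k z • g z) μ :=
  (hk.contDiff.continuous.smul hg).integrable_of_hasCompactSupport hk.hasCompactSupport.smul_right

end IsFiniteMeasureOnCompacts

variable [μ.IsAddHaarMeasure]

theorem rescale (hk : IsMollifier μ k 1) {ε : ℝ} (hε : 0 < ε) :
    IsMollifier μ (rescaledKernel k ε) ε where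
  contDiff := contDiff_const.mul (hk.contDiff.comp (contDiff_const_smul _))
  support_subset := fun z hz => by
    have h := hk.support_subset (right_ne_zero_of_mul hz : k (ε⁻¹ • z) ≠ 0)
    rw [mem_ball_zero_iff, norm_smul, norm_inv, Real.norm_of_nonneg hε.le,
      inv_mul_lt_iff₀ hε, mul_one] at h
    rwa [mem_ball_zero_iff]
  nonneg := fun z => mul_nonneg (by positivity) (hk.nonneg _)
  integral_eq_one := (integral_inv_pow_mul_comp_inv_smul hε k).trans hk.integral_eq_one

theorem integral_norm_fderiv_rescale (hk : IsMollifier μ k 1) {ε : ℝ}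
    (hε : 0 < ε) :
    ∫ z, ‖fderiv ℝ (rescaledKernel k ε) z‖ ∂μ = ε⁻¹ * ∫ z, ‖fderiv ℝ k z‖ ∂μ := by
  rw [← integral_const_mul, ← integral_inv_pow_mul_comp_inv_smul hε
    (fun z => ε⁻¹ * ‖fderiv ℝ k z‖)]
  refine integral_congr_ae (.of_forall fun z => ?_)
  have hd : DifferentiableAt ℝ k (ε⁻¹ • z) := hk.contDiff.differentiable (by simp) _
  change ‖fderiv ℝ (fun z => (ε ^ Module.finrank ℝ E)⁻¹ * k (ε⁻¹ • z)) z‖ = _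
  rw [fderiv_const_mul (by fun_prop), fderiv_comp_smul, norm_smul, norm_smul,
    Real.norm_of_nonneg (by positivity), Real.norm_of_nonneg (by positivity)]

theorem contDiff_convolution (hk : IsMollifier μ k r) (hg : Continuous g) :
    ContDiff ℝ (⊤ : ℕ∞) (k ⋆[lsmul ℝ ℝ, μ] g) :=
  hk.hasCompactSupport.contDiff_convolution_left _ hk.contDiff hg.locallyIntegrable

theorem fderiv_convolution_apply (hk : IsMollifier μ k r)
    (hg : Continuous g) (x v : E) :
    fderiv ℝ (k ⋆[lsmul ℝ ℝ, μ] g) x v = ∫ z, fderiv ℝ k z v • g (x - z) ∂μ := by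
  rw [(hk.hasCompactSupport.hasFDerivAt_convolution_left (lsmul ℝ ℝ) (hk.contDiff.of_le (by simp))
    hg.locallyIntegrable x).fderiv, convolution, ContinuousLinearMap.integral_apply]
  · simp
  · exact (hk.hasCompactSupport.fderiv ℝ).convolutionExists_left _ hk.continuous_fderiv
      hg.locallyIntegrable x

theorem holderWith_convolution (hk : IsMollifier μ k r) (hg : Continuous g)
    (hH : HolderWith H γ g) : HolderWith H γ (k ⋆[lsmul ℝ ℝ, μ] g) := by
  refine holderWith_of_dist_le fun x y => ?_
  have hint (x : E) := hk.integrable_smul (g := fun z => g (x - z)) (by fun_prop)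
  have hk_int : Integrable k μ := by
    simpa using hk.integrable_smul (continuous_const (y := (1 : ℝ)))
  have hmass : ∫ z, k z * (H * dist x y ^ (γ : ℝ)) ∂μ = H * dist x y ^ (γ : ℝ) := by
    rw [integral_mul_const, hk.integral_eq_one, one_mul]
  simp only [convolution, lsmul_apply]
  rw [dist_eq_norm, ← integral_sub (hint x) (hint y), ← hmass]
  refine norm_integral_le_of_norm_le (hk_int.mul_const _) (.of_forall fun z => ?_)
  rw [← smul_sub, norm_smul, Real.norm_of_nonneg (hk.nonneg z), ← dist_eq_norm]
  exact mul_le_mul_of_nonneg_left (by simpa using hH.dist_le (x - z) (y - z)) (hk.nonneg z)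

variable [CompleteSpace F]

theorem integral_fderiv_smul_const (hk : IsMollifier μ k r) (v : E) (a : F) :
    ∫ z, fderiv ℝ k z v • a ∂μ = 0 := by
  have h := hk.fderiv_convolution_apply (continuous_const (y := a)) 0 v
  have hconst : k ⋆[lsmul ℝ ℝ, μ] (fun _ => a) = fun _ => a := by
    ext x
    simp [convolution, integral_smul_const, hk.integral_eq_one]
  simpa [hconst] using h.symm

theorem fderiv_convolution_apply_eq_integral_sub (hk : IsMollifier μ k r)
    (hg : Continuous g) (x v : E) :
    fderiv ℝ (k ⋆[lsmul ℝ ℝ, μ] g) x v = ∫ z, fderiv ℝ k z v • (g (x - z) - g x) ∂μ := by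
  simp only [smul_sub]
  rw [integral_sub (hk.integrable_fderiv_smul (g := fun z => g (x - z)) (by fun_prop) v)
    (hk.integrable_fderiv_smul continuous_const v), hk.integral_fderiv_smul_const, sub_zero,
    hk.fderiv_convolution_apply hg]

theorem norm_comp_fderiv_convolution_le [CompleteSpace G]
    (hk : IsMollifier μ k r) (hg : Continuous g) (L : F →L[ℝ] G) {B : ℝ} (hB : 0 ≤ B) (x : E)
    (hL : ∀ y ∈ closedBall x r, ‖L (g y - g x)‖ ≤ B) :
    ‖L.comp (fderiv ℝ (k ⋆[lsmul ℝ ℝ, μ] g) x)‖ ≤ B * ∫ z, ‖fderiv ℝ k z‖ ∂μ := by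
  refine opNorm_le_bound _ (mul_nonneg hB (integral_nonneg fun _ => norm_nonneg _)) fun v => ?_
  rw [comp_apply, hk.fderiv_convolution_apply_eq_integral_sub hg, ← L.integral_comp_comm
    (hk.integrable_fderiv_smul (g := fun z => g (x - z) - g x) (by fun_prop) v), mul_assoc,
    ← integral_mul_const, ← integral_const_mul]
  refine norm_integral_le_of_norm_le ((hk.integrable_norm_fderiv.mul_const _).const_mul _)
    (.of_forall fun z => ?_)
  by_cases hz : z ∈ closedBall 0 r
  · have hLz := hL (x - z) (by simpa [dist_eq_norm] using hz)
    rw [map_smul, norm_smul, mul_comm]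
    gcongr
    exact (fderiv ℝ k z).le_opNorm v
  · have hz₀ : fderiv ℝ k z = 0 :=
      Function.notMem_support.1 fun h => hz (hk.support_fderiv_subset h)
    simp [hz₀]

theorem norm_fderiv_convolution_le (hk : IsMollifier μ k r)
    (hg : Continuous g) (hH : HolderWith H γ g) (hr : 0 ≤ r) (x : E) :
    ‖fderiv ℝ (k ⋆[lsmul ℝ ℝ, μ] g) x‖ ≤ H * r ^ (γ : ℝ) * ∫ z, ‖fderiv ℝ k z‖ ∂μ := by
  refine hk.norm_comp_fderiv_convolution_le hg (.id ℝ F) (by positivity) x fun y hy => ?_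
  rw [id_apply, ← dist_eq_norm]
  exact (hH.dist_le y x).trans (by gcongr; exact hy)

theorem exists_lipschitzWith_convolution (hk : IsMollifier μ k r)
    (hg : Continuous g) (hH : HolderWith H γ g) (hr : 0 ≤ r) :
    ∃ M : ℝ≥0, LipschitzWith M (k ⋆[lsmul ℝ ℝ, μ] g) :=
  ⟨_, lipschitzWith_of_nnnorm_fderiv_le
    ((hk.contDiff_convolution hg).differentiable (by simp))
    fun x => NNReal.coe_le_coe.1 ((hk.norm_fderiv_convolution_le hg hH hr x).trans
      (Real.le_coe_toNNReal _))⟩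

theorem dist_convolution_le (hk : IsMollifier μ k r) (hg : Continuous g) (hH : HolderWith H γ g)
    (hr : 0 ≤ r) (x : E) : dist ((k ⋆[lsmul ℝ ℝ, μ] g) x) (g x) ≤ H * r ^ (γ : ℝ) :=
  MeasureTheory.dist_convolution_le (by positivity) hk.support_subset hk.nonneg
    hk.integral_eq_one hg.aestronglyMeasurable fun y hy =>
      (hH.dist_le y x).trans (by gcongr; exact (mem_ball.1 hy).le)

theorem tendsto_convolution_rescale (hk : IsMollifier μ k 1) (hg : Continuous g) (x : E) :
    Tendsto (fun q : ℝ × E => (rescaledKernel k q.1 ⋆[lsmul ℝ ℝ, μ] g) q.2)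
      (𝓝[>] 0 ×ˢ 𝓝 x) (𝓝 (g x)) := by
  have hpos : ∀ᶠ q : ℝ × E in 𝓝[>] 0 ×ˢ 𝓝 x, 0 < q.1 :=
    Eventually.prod_inl (self_mem_nhdsWithin (s := Ioi (0 : ℝ))) _
  refine convolution_tendsto_right (hpos.mono fun q hq => (hk.rescale hq).nonneg)
    (hpos.mono fun q hq => (hk.rescale hq).integral_eq_one) ?_
    (.of_forall fun _ => hg.aestronglyMeasurable)
    ((hg.tendsto x).comp tendsto_snd) tendsto_snd
  refine (hasBasis_smallSets _).tendsto_right_iff.2 fun s hs => ?_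
  obtain ⟨δ, hδ, hδs⟩ := Metric.mem_nhds_iff.1 hs
  filter_upwards [hpos, Eventually.prod_inl (nhdsWithin_le_nhds (gt_mem_nhds hδ)) _] with q hq hqδ
  exact ((hk.rescale hq).support_subset.trans (ball_subset_ball hqδ.le)).trans hδs

variable {V W : Type*} [NormedAddCommGroup V] [NormedSpace ℝ V] [CompleteSpace V]
  [NormedAddCommGroup W] [NormedSpace ℝ W] [CompleteSpace W] {α : V → V →L[ℝ] W} {Λ : ℝ≥0}
  {g : E → V} {B : ℝ}

theorem norm_formPullback_convolution_le (hk : IsMollifier μ k r) (hα : LipschitzWith Λ α)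
    (hg : Continuous g) (hH : HolderWith H γ g) (hr : 0 ≤ r) (hB : 0 ≤ B) (x : E)
    (hα_g : ∀ y ∈ closedBall x r, ‖α (g x) (g y - g x)‖ ≤ B) :
    ‖formPullback α (k ⋆[lsmul ℝ ℝ, μ] g) x‖ ≤
      (B + Λ * (H * r ^ (γ : ℝ)) ^ 2) * ∫ z, ‖fderiv ℝ k z‖ ∂μ := by
  set G := k ⋆[lsmul ℝ ℝ, μ] g
  have hchange : ‖α (G x) - α (g x)‖ ≤ Λ * (H * r ^ (γ : ℝ)) := by
    rw [← dist_eq_norm]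
    exact (hα.dist_le_mul _ _).trans (by gcongr; exact hk.dist_convolution_le hg hH hr x)
  calc ‖formPullback α G x‖
      = ‖(α (g x)).comp (fderiv ℝ G x) + (α (G x) - α (g x)).comp (fderiv ℝ G x)‖ := by
        rw [← add_comp, add_sub_cancel, formPullback]
    _ ≤ B * (∫ z, ‖fderiv ℝ k z‖ ∂μ) +
          Λ * (H * r ^ (γ : ℝ)) * (H * r ^ (γ : ℝ) * ∫ z, ‖fderiv ℝ k z‖ ∂μ) := by
        refine norm_add_le_of_le (hk.norm_comp_fderiv_convolution_le hg _ hB x hα_g)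
          ((opNorm_comp_le _ _).trans ?_)
        gcongr
        exact hk.norm_fderiv_convolution_le hg hH hr x
    _ = _ := by ring

theorem norm_formPullback_convolution_rescale_le (hk : IsMollifier μ k 1)
    (hα : LipschitzWith Λ α) (hg : Continuous g) (hH : HolderWith H γ g) (hB : 0 ≤ B)
    (hα_g : ∀ x y, ‖α (g x) (g y - g x)‖ ≤ B * dist x y ^ (2 * (γ : ℝ))) {ε : ℝ} (hε : 0 < ε)
    (x : E) :
    ‖formPullback α (rescaledKernel k ε ⋆[lsmul ℝ ℝ, μ] g) x‖ ≤
      (B + Λ * H ^ 2) * (∫ z, ‖fderiv ℝ k z‖ ∂μ) * ε ^ (2 * (γ : ℝ) - 1) := by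
  have hsq : (ε ^ (γ : ℝ)) ^ 2 = ε ^ (2 * (γ : ℝ)) := by
    rw [mul_comm, Real.rpow_mul hε.le, Real.rpow_two]
  refine ((hk.rescale hε).norm_formPullback_convolution_le hα hg hH hε.le
    (B := B * ε ^ (2 * (γ : ℝ))) (by positivity) x fun y hy => ?_).trans_eq ?_
  · refine (hα_g x y).trans ?_
    gcongr
    exact mem_closedBall'.1 hy
  · rw [hk.integral_norm_fderiv_rescale hε, mul_pow, hsq, Real.rpow_sub hε, Real.rpow_one]
    ring

end IsMollifier

end Mollification

section LineAverage

theorem integrable_restrict_uIoc_prod {W X : Type*} [NormedAddCommGroup W] [TopologicalSpace X]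
    [SecondCountableTopology X] [T2Space X] [MeasurableSpace X] [BorelSpace X] {μ : Measure X}
    [SFinite μ] [IsFiniteMeasureOnCompacts μ] {F : ℝ × X → W} (hF : Continuous F) {K : Set X}
    (hK : IsCompact K) {a b : ℝ} (h₀ : ∀ s ∈ uIcc a b, ∀ x ∉ K, F (s, x) = 0) :
    Integrable F ((volume.restrict (uIoc a b)).prod μ) := by
  rw [← μ.restrict_univ, Measure.prod_restrict]
  refine IntegrableOn.of_forall_sdiff_eq_zero
    (hF.continuousOn.integrableOn_compact ((isCompact_uIcc (a := a) (b := b)).prod hK))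
    (measurableSet_uIoc.prod .univ) ?_
  rintro ⟨s, x⟩ ⟨⟨hs, -⟩, hx⟩
  have hs' : s ∈ uIcc a b := uIoc_subset_uIcc hs
  exact h₀ s hs' x fun hxK => hx ⟨hs', hxK⟩

theorem norm_sub_integral_smul_le {W X : Type*} [NormedAddCommGroup W] [NormedSpace ℝ W]
    [CompleteSpace W] [TopologicalSpace X] [MeasurableSpace X] [OpensMeasurableSpace X]
    {μ : Measure X} [IsFiniteMeasureOnCompacts μ] {ψ : X → ℝ} (hψ : Continuous ψ)
    (hψc : HasCompactSupport ψ) (hψ₀ : ∀ x, 0 ≤ ψ x) (hψ₁ : ∫ x, ψ x ∂μ = 1) {u : X → W}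
    (hu : Continuous u) {P : W} {Q : ℝ} (hPu : ∀ x ∈ tsupport ψ, ‖P - u x‖ ≤ Q) :
    ‖P - ∫ x, ψ x • u x ∂μ‖ ≤ Q := by
  have hψi : Integrable ψ μ := hψ.integrable_of_hasCompactSupport hψc
  have hP : ∫ x, ψ x • P ∂μ = P := by rw [integral_smul_const, hψ₁, one_smul]
  have hQ : ∫ x, ψ x * Q ∂μ = Q := by rw [integral_mul_const, hψ₁, one_mul]
  have hψu : Integrable (fun x => ψ x • u x) μ :=
    (hψ.smul hu).integrable_of_hasCompactSupport hψc.smul_right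
  rw [← hP, ← integral_sub (hψi.smul_const P) hψu, ← hQ]
  refine norm_integral_le_of_norm_le (hψi.mul_const Q) (.of_forall fun x => ?_)
  rw [← smul_sub, norm_smul, Real.norm_of_nonneg (hψ₀ x)]
  by_cases hx : x ∈ tsupport ψ
  · exact mul_le_mul_of_nonneg_left (hPu x hx) (hψ₀ x)
  · simp [image_eq_zero_of_notMem_tsupport hx]

variable {E W : Type*} [NormedAddCommGroup E] [NormedSpace ℝ E] [NormedAddCommGroup W]
  [NormedSpace ℝ W] {ψ : E → ℝ}

theorem eventually_nhds_forall_add_smul_mem {U : Set E} (hU : IsOpen U) {y v : E}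
    (hseg : segment ℝ y (y + v) ⊆ U) : ∀ᶠ z in 𝓝 y, ∀ s ∈ uIcc (0 : ℝ) 1, z + s • v ∈ U := by
  refine isCompact_uIcc.eventually_forall_of_forall_eventually fun s hs => ?_
  have hcont : Continuous fun q : E × ℝ => q.1 + q.2 • v := by fun_prop
  refine hcont.continuousAt.eventually (hU.mem_nhds (hseg ?_))
  rw [segment_eq_image']
  exact ⟨s, by simpa using hs, by simp⟩

/-- The average `w ↦ ∫₀¹ ψ (w - s v) ds` of `ψ` along the direction `v`; it is the adjoint of
averaging over the segments `[x, x + v]`. -/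
noncomputable def lineAverage (ψ : E → ℝ) (v w : E) : ℝ :=
  ∫ s in (0 : ℝ)..1, ψ (w - s • v)

theorem isCompact_image2_add_smul {S : Set E} (hS : IsCompact S) (v : E) :
    IsCompact (image2 (fun (s : ℝ) z => z + s • v) (uIcc 0 1) S) := by
  rw [← image_uncurry_prod]
  exact (isCompact_uIcc.prod hS).image (by fun_prop)

theorem support_lineAverage_subset (v : E) :
    Function.support (lineAverage ψ v) ⊆
      image2 (fun (s : ℝ) z => z + s • v) (uIcc 0 1) (tsupport ψ) := fun w hw => by
  by_contra hnot
  refine hw ((intervalIntegral.integral_congr (g := fun _ => (0 : ℝ)) fun s hs => ?_).trans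
    intervalIntegral.integral_zero)
  exact image_eq_zero_of_notMem_tsupport fun h => hnot ⟨s, hs, w - s • v, h, by simp⟩

-- Averaging along `v` is convolution with the law of `s • v` for `s` uniform in `[0, 1]`.
theorem contDiff_lineAverage (hψ : ContDiff ℝ (⊤ : ℕ∞) ψ) (hψc : HasCompactSupport ψ) (v : E) :
    ContDiff ℝ (⊤ : ℕ∞) (lineAverage ψ v) := by
  borelize E
  let ν : Measure E := (volume.restrict (Ioc (0 : ℝ) 1)).map fun s => s • v
  have hmeas : Measurable fun s : ℝ => s • v := by fun_prop
  have : IsFiniteMeasure ν := by infer_instance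
  have hconv : lineAverage ψ v = (fun _ => (1 : ℝ)) ⋆[lsmul ℝ ℝ, ν] ψ := by
    ext w
    simp only [convolution, lsmul_apply, one_smul]
    have hψw : Continuous fun z => ψ (w - z) := hψ.continuous.comp (by fun_prop)
    rw [lineAverage, intervalIntegral.integral_of_le zero_le_one]
    exact (integral_map hmeas.aemeasurable hψw.aestronglyMeasurable).symm
  rw [hconv]
  exact hψc.contDiff_convolution_right (lsmul ℝ ℝ) (integrable_const _).locallyIntegrable hψ

variable [FiniteDimensional ℝ E] [MeasurableSpace E] [BorelSpace E] {μ : Measure E}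
  [μ.IsAddHaarMeasure] [CompleteSpace W]

theorem integral_lineAverage_smul {A : E → W} (hA : Continuous A) (hψ : Continuous ψ)
    (hψc : HasCompactSupport ψ) (v : E) :
    ∫ w, lineAverage ψ v w • A w ∂μ =
      ∫ x, ψ x • (∫ s in (0 : ℝ)..1, A (x + s • v)) ∂μ := by
  simp only [lineAverage, ← intervalIntegral.integral_smul, ← intervalIntegral.integral_smul_const]
  rw [← intervalIntegral_integral_swap, ← intervalIntegral_integral_swap]
  · refine intervalIntegral.integral_congr fun s _ => ?_
    simpa using integral_sub_right_eq_self (fun x => ψ x • A (x + s • v)) (s • v) (μ := μ)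
  · refine integrable_restrict_uIoc_prod (F := fun q : ℝ × E => ψ q.2 • A (q.2 + q.1 • v))
      (by fun_prop) hψc fun s _ x hx => ?_
    simp [image_eq_zero_of_notMem_tsupport hx]
  · refine integrable_restrict_uIoc_prod (F := fun q : ℝ × E => ψ (q.2 - q.1 • v) • A q.2)
      (by fun_prop) (isCompact_image2_add_smul hψc v) fun s hs x hx => ?_
    have hx' : x - s • v ∉ tsupport ψ := fun h => hx ⟨s, hs, _, h, by simp⟩
    simp [image_eq_zero_of_notMem_tsupport hx']

/-- Convergence to `0` of the functions `F i` in the sense of distributions on `U`: all integrals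
against real-valued test functions supported in `U` tend to `0`. -/
def TendstoZeroInDistrib {ι : Type*} (μ : Measure E) (F : ι → E → W) (l : Filter ι)
    (U : Set E) : Prop :=
  ∀ φ : E → ℝ, ContDiff ℝ (⊤ : ℕ∞) φ → HasCompactSupport φ → tsupport φ ⊆ U →
    Tendsto (fun i => ∫ x, φ x • F i x ∂μ) l (𝓝 0)

theorem TendstoZeroInDistrib.norm_le {ι : Type*} {F : ι → E → W} {l : Filter ι} [l.NeBot]
    {U : Set E} (h : TendstoZeroInDistrib μ F l U) (hF : ∀ᶠ i in l, Continuous (F i))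
    (hU : IsOpen U) {y v : E} (hseg : segment ℝ y (y + v) ⊆ U) {P : W} {Q : ℝ}
    (hPQ : ∀ᶠ q in l ×ˢ 𝓝 y, ‖P - ∫ s in (0 : ℝ)..1, F q.1 (q.2 + s • v)‖ ≤ Q) : ‖P‖ ≤ Q := by
  obtain ⟨p, hp, p', hp', hpp'⟩ := eventually_prod_iff.1 hPQ
  obtain ⟨δ, hδ, hδy⟩ := nhds_basis_closedBall.mem_iff.1
    (hp'.and (eventually_nhds_forall_add_smul_mem hU hseg))
  let bump : ContDiffBump y := ⟨δ / 2, δ, half_pos hδ, half_lt_self hδ⟩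
  let ψ := bump.normed μ
  have hψ : ContDiff ℝ (⊤ : ℕ∞) ψ := bump.contDiff_normed
  have hψc : HasCompactSupport ψ := bump.hasCompactSupport_normed
  have hψδ : tsupport ψ = closedBall y δ := bump.tsupport_normed_eq
  have hsweep := isCompact_image2_add_smul hψc v
  have hsweepU : image2 (fun (s : ℝ) z => z + s • v) (uIcc 0 1) (tsupport ψ) ⊆ U :=
    image2_subset_iff.2 fun s hs z hz => (hδy (hψδ ▸ hz)).2 s hs
  have hsupp := support_lineAverage_subset (ψ := ψ) v
  have hlim := h (lineAverage ψ v) (contDiff_lineAverage hψ hψc v)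
    (.of_support_subset_isCompact hsweep hsupp)
    ((closure_minimal hsupp hsweep.isClosed).trans hsweepU)
  have hle : ∀ᶠ i in l, ‖P - ∫ w, lineAverage ψ v w • F i w ∂μ‖ ≤ Q := by
    filter_upwards [hp, hF] with i hi hFi
    rw [integral_lineAverage_smul hFi hψ.continuous hψc]
    exact norm_sub_integral_smul_le hψ.continuous hψc bump.nonneg_normed bump.integral_normed
      (intervalIntegral.continuous_parametric_intervalIntegral_of_continuous'
        (f := fun z s => F i (z + s • v)) (by fun_prop) 0 1)
      fun x hx => hpp' hi (hδy (hψδ ▸ hx)).1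
  simpa using le_of_tendsto (tendsto_const_nhds.sub hlim).norm hle

end LineAverage

section VerticalEstimate

variable {E V W : Type*} [NormedAddCommGroup E] [NormedSpace ℝ E] [FiniteDimensional ℝ E]
  [MeasurableSpace E] [BorelSpace E] {μ : Measure E} [μ.IsAddHaarMeasure]
  [NormedAddCommGroup V] [NormedSpace ℝ V] [CompleteSpace V]
  [NormedAddCommGroup W] [NormedSpace ℝ W] [CompleteSpace W]
  {α : V → V →L[ℝ] W} {Λ H γ : ℝ≥0} {k : E → ℝ} {g : E → V}

theorem IsMollifier.norm_form_sub_le_of_tendstoZeroInDistrib (hk : IsMollifier μ k 1)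
    (hγ : 1 < 2 * (γ : ℝ)) (hα : LipschitzWith Λ α) (hg : Continuous g) (hH : HolderWith H γ g)
    {U : Set E} (hU : IsOpen U) {y v : E} (hseg : segment ℝ y (y + v) ⊆ U)
    (h : TendstoZeroInDistrib μ
      (fun ε x => formPullback α (rescaledKernel k ε ⋆[lsmul ℝ ℝ, μ] g) x v) (𝓝[>] 0) U) :
    ‖α (g y) (g (y + v) - g y)‖ ≤
      sewingConst (2 * γ) * (Λ * H ^ 2) * ‖v‖ ^ (2 * (γ : ℝ)) := by
  set G : ℝ → E → V := fun ε => rescaledKernel k ε ⋆[lsmul ℝ ℝ, μ] g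
  set Q := sewingConst (2 * γ) * (Λ * H ^ 2) * ‖v‖ ^ (2 * (γ : ℝ))
  have hsmooth {ε : ℝ} (hε : 0 < ε) : ContDiff ℝ 1 (G ε) :=
    ((hk.rescale hε).contDiff_convolution hg).of_le (by simp)
  have hchord : Tendsto (fun q : ℝ × E => α (G q.1 q.2) (G q.1 (q.2 + v) - G q.1 q.2))
      (𝓝[>] 0 ×ˢ 𝓝 y) (𝓝 (α (g y) (g (y + v) - g y))) := by
    have hy := hk.tendsto_convolution_rescale hg y
    have hshift : Tendsto (fun q : ℝ × E => (q.1, q.2 + v)) (𝓝[>] 0 ×ˢ 𝓝 y)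
        (𝓝[>] 0 ×ˢ 𝓝 (y + v)) := tendsto_id.prodMap (tendsto_id.add_const v)
    have hform : Continuous fun q : V × V => α q.1 (q.2 - q.1) :=
      (hα.continuous.comp continuous_fst).clm_apply (continuous_snd.sub continuous_fst)
    exact (hform.tendsto _).comp
      (hy.prodMk_nhds ((hk.tendsto_convolution_rescale hg (y + v)).comp hshift))
  refine le_of_forall_pos_le_add fun δ hδ => h.norm_le ?_ hU hseg ?_
  · filter_upwards [self_mem_nhdsWithin] with ε hε
    exact (continuous_formPullback hα.continuous (hsmooth hε)).clm_apply continuous_const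
  · filter_upwards [hchord.eventually (closedBall_mem_nhds _ hδ),
      Eventually.prod_inl (self_mem_nhdsWithin (s := Ioi (0 : ℝ))) _]
    rintro ⟨ε, z⟩ hz (hε : 0 < ε)
    have hkε := hk.rescale hε
    obtain ⟨M, hM⟩ := hkε.exists_lipschitzWith_convolution hg hH hε.le
    have hsew := norm_sub_integral_formPullback_le hγ hα (hsmooth hε) hM
      (hkε.holderWith_convolution hg hH) z v
    rw [dist_comm, dist_eq_norm] at hz
    rw [add_comm Q δ]
    exact (norm_sub_le_norm_sub_add_norm_sub _ _ _).trans (add_le_add hz hsew)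

end VerticalEstimate

section Localization

/-- Local Hölder continuity on `Ω` with exponent `γ`, where distances between values are measured
by an arbitrary function `d`. -/
def LocallyHolderOn {X Y : Type*} [PseudoMetricSpace X] (d : Y → Y → ℝ) (γ : ℝ) (f : X → Y)
    (Ω : Set X) : Prop :=
  ∀ p ∈ Ω, ∃ r : ℝ, 0 < r ∧ ∃ C : ℝ, ∀ x ∈ ball p r ∩ Ω, ∀ y ∈ ball p r ∩ Ω,
    d (f x) (f y) ≤ C * dist x y ^ γ

theorem LocallyHolderOn.exists_eventually_closedBall {X Y : Type*} [PseudoMetricSpace X]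
    {d : Y → Y → ℝ} {γ : ℝ} {f : X → Y} {Ω : Set X} (hf : LocallyHolderOn d γ f Ω)
    (hΩ : IsOpen Ω) {p : X} (hp : p ∈ Ω) :
    ∃ C : ℝ≥0, ∀ᶠ a in 𝓝[>] (0 : ℝ), ∀ x ∈ closedBall p a, ∀ y ∈ closedBall p a,
      d (f x) (f y) ≤ C * dist x y ^ γ := by
  obtain ⟨r, hr, C, hC⟩ := hf p hp
  obtain ⟨δ, hδ, hδΩ⟩ :=
    Metric.mem_nhds_iff.1 (Filter.inter_mem (ball_mem_nhds p hr) (hΩ.mem_nhds hp))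
  refine ⟨C.toNNReal, ?_⟩
  filter_upwards [nhdsWithin_le_nhds (gt_mem_nhds hδ)] with a ha x hx y hy
  have hsub := (closedBall_subset_ball ha).trans hδΩ
  refine (hC x (hsub hx) y (hsub hy)).trans ?_
  gcongr
  exact Real.le_coe_toNNReal C

theorem exists_lipschitzWith_one_retraction {E : Type*} [NormedAddCommGroup E]
    [InnerProductSpace ℝ E] {K : Set E} (hne : K.Nonempty) (hcomplete : IsComplete K)
    (hconvex : Convex ℝ K) :
    ∃ ρ : E → E, LipschitzWith 1 ρ ∧ (∀ x, ρ x ∈ K) ∧ ∀ x ∈ K, ρ x = x := by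
  choose ρ hρK hρ using exists_norm_eq_iInf_of_complete_convex hne hcomplete hconvex
  have hangle (x : E) : ∀ w ∈ K, ⟪x - ρ x, w - ρ x⟫ ≤ 0 :=
    (norm_eq_iInf_iff_real_inner_le_zero hconvex (hρK x)).1 (hρ x)
  refine ⟨ρ, LipschitzWith.of_dist_le_mul fun x y => ?_, hρK, fun x hx => ?_⟩
  · have hmono : ‖ρ x - ρ y‖ ^ 2 ≤ ‖x - y‖ * ‖ρ x - ρ y‖ := by
      have hx := hangle x _ (hρK y)
      have hy := hangle y _ (hρK x)
      have hxy := real_inner_le_norm (x - y) (ρ x - ρ y)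
      rw [← real_inner_self_eq_norm_sq]
      simp only [inner_sub_left, inner_sub_right] at *
      linarith
    rw [NNReal.coe_one, one_mul, dist_eq_norm, dist_eq_norm]
    nlinarith [norm_nonneg (x - y), norm_nonneg (ρ x - ρ y)]
  · have h := hangle x x hx
    rw [real_inner_self_nonpos, sub_eq_zero] at h
    exact h.symm

theorem LocallyHolderOn.exists_retraction_holderWith {E Y : Type*} [NormedAddCommGroup E]
    [InnerProductSpace ℝ E] [CompleteSpace E] [PseudoMetricSpace Y] {γ : ℝ≥0} {f : E → Y}
    {Ω : Set E} (hf : LocallyHolderOn dist γ f Ω) (hΩ : IsOpen Ω) {p : E} (hp : p ∈ Ω) :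
    ∃ H : ℝ≥0, ∀ᶠ a in 𝓝[>] (0 : ℝ), closedBall p a ⊆ Ω ∧ ∃ ρ : E → E, LipschitzWith 1 ρ ∧
      (∀ x, ρ x ∈ closedBall p a) ∧ EqOn f (f ∘ ρ) (closedBall p a) ∧ HolderWith H γ (f ∘ ρ) := by
  obtain ⟨H, hH⟩ := hf.exists_eventually_closedBall hΩ hp
  obtain ⟨δ, hδ, hδΩ⟩ := nhds_basis_closedBall.mem_iff.1 (hΩ.mem_nhds hp)
  refine ⟨H, ?_⟩
  filter_upwards [hH, self_mem_nhdsWithin, nhdsWithin_le_nhds (gt_mem_nhds hδ)] with a ha ha₀ haδ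
  obtain ⟨ρ, hρ, hρa, hρ_eq⟩ := exists_lipschitzWith_one_retraction
    (nonempty_closedBall.2 (le_of_lt ha₀)) isClosed_closedBall.isComplete (convex_closedBall p a)
  refine ⟨(closedBall_subset_closedBall haδ.le).trans hδΩ, ρ, hρ, hρa, fun x hx => ?_,
    holderWith_of_dist_le fun x y => (ha _ (hρa x) _ (hρa y)).trans ?_⟩
  · rw [Function.comp_apply, hρ_eq x hx]
  · gcongr
    simpa using hρ.dist_le_mul x y

theorem eventually_forall_of_isCompact {ι X : Type*} [TopologicalSpace X]
    {K : Set X} (hK : IsCompact K) {l : Filter ι} {P : ι → X → Prop}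
    (hP : ∀ x ∈ K, ∀ᶠ q in l ×ˢ 𝓝 x, P q.1 q.2) : ∀ᶠ i in l, ∀ x ∈ K, P i x := by
  have hKP : ∀ᶠ q in l ×ˢ 𝓝ˢ K, P q.1 q.2 := hK.mem_prod_nhdsSet_of_forall hP
  exact hKP.curry.mono fun _ hi => hi.self_of_nhdsSet

theorem IsMollifier.convolution_rescale_eventuallyEq {E F : Type*} [NormedAddCommGroup E]
    [NormedSpace ℝ E] [FiniteDimensional ℝ E] [MeasurableSpace E] [BorelSpace E] {μ : Measure E}
    [μ.IsAddHaarMeasure] [NormedAddCommGroup F] [NormedSpace ℝ F] {k : E → ℝ} {f g : E → F}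
    {p : E} (hk : IsMollifier μ k 1) (hfg : f =ᶠ[𝓝 p] g) :
    ∀ᶠ q : ℝ × E in 𝓝[>] 0 ×ˢ 𝓝 p, rescaledKernel k q.1 ⋆[lsmul ℝ ℝ, μ] f =ᶠ[𝓝 q.2]
      rescaledKernel k q.1 ⋆[lsmul ℝ ℝ, μ] g := by
  obtain ⟨δ, hδ, hδfg⟩ := Metric.eventually_nhds_iff_ball.1 hfg
  filter_upwards [Eventually.prod_mk (inter_mem self_mem_nhdsWithin
    (nhdsWithin_le_nhds (gt_mem_nhds (half_pos hδ)))) (ball_mem_nhds p (half_pos hδ))]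
  rintro ⟨ε, x⟩ ⟨⟨hε, hεδ⟩, hx⟩
  refine (hk.rescale hε).convolution_eventuallyEq hεδ fun w hw => hδfg w ?_
  exact ball_subset_ball' (by linarith [mem_ball.1 hx]) hw

theorem formPullback_congr {E V W : Type*} [NormedAddCommGroup E]
    [NormedSpace ℝ E] [NormedAddCommGroup V] [NormedSpace ℝ V] [NormedAddCommGroup W]
    [NormedSpace ℝ W] {α : V → V →L[ℝ] W} {G G' : E → V} {x : E} (h : G =ᶠ[𝓝 x] G') :
    formPullback α G x = formPullback α G' x := by
  rw [formPullback, formPullback, h.eq_of_nhds, h.fderiv_eq]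

end Localization

theorem eventuallyEq_integral_of_isCompact {ι X W : Type*} [TopologicalSpace X]
    [MeasurableSpace X] {μ : Measure X} [NormedAddCommGroup W] [NormedSpace ℝ W] {l : Filter ι}
    {F G : ι → X → W} {K : Set X} (hK : IsCompact K)
    (hFG : ∀ x ∈ K, ∀ᶠ q in l ×ˢ 𝓝 x, F q.1 q.2 = G q.1 q.2)
    (hFG' : ∀ i, ∀ x ∉ K, F i x = G i x) :
    (fun i => ∫ x, F i x ∂μ) =ᶠ[l] fun i => ∫ x, G i x ∂μ := by
  filter_upwards [eventually_forall_of_isCompact (P := fun i x => F i x = G i x) hK hFG] with i hi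
  refine integral_congr_ae (.of_forall fun x => ?_)
  by_cases hx : x ∈ K
  exacts [hi x hx, hFG' i x hx]

section DistributionalLimits

variable {ι E W : Type*} [NormedAddCommGroup E] [NormedSpace ℝ E] [MeasurableSpace E]
  {μ : Measure E} [NormedAddCommGroup W] [NormedSpace ℝ W] {l : Filter ι} {Ω : Set E}

theorem TendstoZeroInDistrib.mono_congr {F G : ι → E → W} {U : Set E}
    (h : TendstoZeroInDistrib μ F l Ω) (hU : U ⊆ Ω)
    (hFG : ∀ x ∈ U, ∀ᶠ q in l ×ˢ 𝓝 x, F q.1 q.2 = G q.1 q.2) :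
    TendstoZeroInDistrib μ G l U := fun φ hφ hφc hφU => by
  refine (h φ hφ hφc (hφU.trans hU)).congr' (eventuallyEq_integral_of_isCompact hφc
    (fun x hx => (hFG x (hφU hx)).mono fun q hq => by rw [hq]) fun i x hx => ?_)
  simp only [image_eq_zero_of_notMem_tsupport hx, zero_smul]

theorem tendsto_integral_apply_of_tendstoLocallyUniformlyOn [BorelSpace E]
    [IsFiniteMeasureOnCompacts μ] {F : ι → E → E →L[ℝ] W}
    (hF : TendstoLocallyUniformlyOn F 0 l Ω) {Φ : E → E} (hΦ : Continuous Φ)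
    (hΦc : HasCompactSupport Φ) (hΦΩ : tsupport Φ ⊆ Ω) :
    Tendsto (fun i => ∫ x, F i x (Φ x) ∂μ) l (𝓝 0) := by
  have hΦi : Integrable (fun x => ‖Φ x‖) μ := (hΦ.integrable_of_hasCompactSupport hΦc).norm
  have hunif : Tendsto (fun δ : ℝ => δ * ∫ x, ‖Φ x‖ ∂μ) (𝓝[>] 0) (𝓝 0) :=
    tendsto_nhdsWithin_of_tendsto_nhds
      (Continuous.tendsto' (by fun_prop) 0 0 (zero_mul _))
  refine Metric.tendsto_nhds.2 fun κ hκ => ?_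
  obtain ⟨δ, hδκ, hδ⟩ := ((hunif.eventually_lt_const hκ).and self_mem_nhdsWithin).exists
  have hK := (tendstoLocallyUniformlyOn_iff_tendstoUniformlyOn_of_compact hΦc).1 (hF.mono hΦΩ)
  filter_upwards [Metric.tendstoUniformlyOn_iff.1 hK δ hδ] with i hi
  rw [dist_zero_right]
  refine (norm_integral_le_of_norm_le (hΦi.const_mul δ) (.of_forall fun x => ?_)).trans_lt
    (by rwa [integral_const_mul])
  by_cases hx : x ∈ tsupport Φ
  · have hFx := (hi x hx).le
    rw [Pi.zero_apply, dist_zero_left] at hFx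
    exact (F i x).le_of_opNorm_le hFx _
  · simp [image_eq_zero_of_notMem_tsupport hx]

end DistributionalLimits

section HolderMaps

variable {E V W : Type*} [NormedAddCommGroup E] [InnerProductSpace ℝ E] [FiniteDimensional ℝ E]
  [MeasurableSpace E] [BorelSpace E] {μ : Measure E} [μ.IsAddHaarMeasure]
  [NormedAddCommGroup V] [NormedSpace ℝ V]
  [NormedAddCommGroup W] [NormedSpace ℝ W] [CompleteSpace W]
  {α : V → V →L[ℝ] W} {Λ γ : ℝ≥0} {k : E → ℝ} {f : E → V} {Ω : Set E}

theorem IsMollifier.eventually_differentiableAt_convolution (hk : IsMollifier μ k 1) (hγ : 0 < γ)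
    (hΩ : IsOpen Ω) (hf : LocallyHolderOn dist γ f Ω) {p : E} (hp : p ∈ Ω) :
    ∀ᶠ q : ℝ × E in 𝓝[>] 0 ×ˢ 𝓝 p,
      DifferentiableAt ℝ (rescaledKernel k q.1 ⋆[lsmul ℝ ℝ, μ] f) q.2 := by
  obtain ⟨H, hH⟩ := hf.exists_retraction_holderWith hΩ hp
  obtain ⟨a, ⟨-, ρ, -, -, hfρ, hρH⟩, ha⟩ := (hH.and self_mem_nhdsWithin).exists
  filter_upwards [hk.convolution_rescale_eventuallyEq (hfρ.eventuallyEq_of_mem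
    (closedBall_mem_nhds p ha)), Eventually.prod_inl self_mem_nhdsWithin _] with q hq hq₀
  exact (((hk.rescale hq₀).contDiff_convolution (hρH.continuous hγ)).differentiable
    (by simp) _).congr_of_eventuallyEq hq

variable [CompleteSpace V]

namespace IsMollifier

theorem exists_eventually_norm_formPullback_le (hk : IsMollifier μ k 1) (hγ : 0 < γ)
    (hα : LipschitzWith Λ α) (hΩ : IsOpen Ω) (hf : LocallyHolderOn dist γ f Ω)
    (hv : LocallyHolderOn (fun p q => ‖α p (q - p)‖) (2 * γ) f Ω) {p : E} (hp : p ∈ Ω) :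
    ∃ C : ℝ, ∀ᶠ q : ℝ × E in 𝓝[>] 0 ×ˢ 𝓝 p,
      ‖formPullback α (rescaledKernel k q.1 ⋆[lsmul ℝ ℝ, μ] f) q.2‖ ≤
        C * q.1 ^ (2 * (γ : ℝ) - 1) := by
  obtain ⟨H, hH⟩ := hf.exists_retraction_holderWith hΩ hp
  obtain ⟨B, hB⟩ := hv.exists_eventually_closedBall hΩ hp
  obtain ⟨a, ⟨⟨-, ρ, hρ, hρa, hfρ, hρH⟩, haB⟩, ha⟩ :=
    ((hH.and hB).and self_mem_nhdsWithin).exists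
  have hvertical (x y : E) :
      ‖α ((f ∘ ρ) x) ((f ∘ ρ) y - (f ∘ ρ) x)‖ ≤ B * dist x y ^ (2 * (γ : ℝ)) := by
    refine (haB _ (hρa x) _ (hρa y)).trans ?_
    gcongr
    simpa using hρ.dist_le_mul x y
  refine ⟨(B + Λ * H ^ 2) * ∫ z, ‖fderiv ℝ k z‖ ∂μ, ?_⟩
  filter_upwards [hk.convolution_rescale_eventuallyEq (hfρ.eventuallyEq_of_mem
    (closedBall_mem_nhds p ha)), Eventually.prod_inl self_mem_nhdsWithin _] with q hq hq₀
  rw [formPullback_congr hq]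
  exact hk.norm_formPullback_convolution_rescale_le hα (hρH.continuous hγ) hρH B.coe_nonneg
    hvertical hq₀ q.2

theorem tendstoLocallyUniformlyOn_formPullback (hk : IsMollifier μ k 1) (hγ : 1 < 2 * (γ : ℝ))
    (hα : LipschitzWith Λ α) (hΩ : IsOpen Ω) (hf : LocallyHolderOn dist γ f Ω)
    (hv : LocallyHolderOn (fun p q => ‖α p (q - p)‖) (2 * γ) f Ω) :
    TendstoLocallyUniformlyOn
      (fun ε => formPullback α (rescaledKernel k ε ⋆[lsmul ℝ ℝ, μ] f)) 0 (𝓝[>] 0) Ω := by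
  have hγ₀ : 0 < γ := NNReal.coe_pos.1 (by linarith)
  refine tendstoLocallyUniformlyOn_iff_filter.2 fun p hp => ?_
  rw [hΩ.nhdsWithin_eq hp, Metric.tendstoUniformlyOnFilter_iff]
  intro δ hδ
  obtain ⟨C, hC⟩ := hk.exists_eventually_norm_formPullback_le hγ₀ hα hΩ hf hv hp
  have hlim : Tendsto (fun ε : ℝ => C * ε ^ (2 * (γ : ℝ) - 1)) (𝓝[>] 0) (𝓝 0) := by
    have h := (Real.continuousAt_rpow_const 0 (2 * (γ : ℝ) - 1) (.inr (by linarith))).tendsto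
    rw [Real.zero_rpow (by linarith)] at h
    simpa using (h.mono_left nhdsWithin_le_nhds).const_mul C
  filter_upwards [hC, Eventually.prod_inl (hlim.eventually_lt_const hδ) _] with q hq hqδ
  rw [Pi.zero_apply, dist_zero_left]
  exact hq.trans_lt hqδ

end IsMollifier

theorem IsMollifier.locallyHolderOn_of_tendstoZeroInDistrib (hk : IsMollifier μ k 1)
    (hγ : 1 < 2 * (γ : ℝ)) (hα : LipschitzWith Λ α) (hΩ : IsOpen Ω)
    (hf : LocallyHolderOn dist γ f Ω)
    (h : ∀ v, TendstoZeroInDistrib μ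
      (fun ε x => formPullback α (rescaledKernel k ε ⋆[lsmul ℝ ℝ, μ] f) x v) (𝓝[>] 0) Ω) :
    LocallyHolderOn (fun p q => ‖α p (q - p)‖) (2 * γ) f Ω := by
  have hγ₀ : 0 < γ := NNReal.coe_pos.1 (by linarith)
  intro p hp
  obtain ⟨H, hH⟩ := hf.exists_retraction_holderWith hΩ hp
  obtain ⟨a, ⟨haΩ, ρ, -, -, hfρ, hρH⟩, ha⟩ := (hH.and self_mem_nhdsWithin).exists
  have hfρ' : EqOn f (f ∘ ρ) (ball p a) := hfρ.mono ball_subset_closedBall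
  refine ⟨a, ha, sewingConst (2 * γ) * (Λ * H ^ 2), fun x hx y hy => ?_⟩
  have hlim : TendstoZeroInDistrib μ (fun ε z =>
      formPullback α (rescaledKernel k ε ⋆[lsmul ℝ ℝ, μ] (f ∘ ρ)) z (y - x)) (𝓝[>] 0)
      (ball p a) := by
    refine (h (y - x)).mono_congr (ball_subset_closedBall.trans haΩ) fun z hz => ?_
    filter_upwards [hk.convolution_rescale_eventuallyEq
      (hfρ'.eventuallyEq_of_mem (isOpen_ball.mem_nhds hz))] with q hq
    rw [formPullback_congr hq]
  have hseg : segment ℝ x (x + (y - x)) ⊆ ball p a := by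
    rw [add_sub_cancel]
    exact (convex_ball p a).segment_subset hx.1 hy.1
  have hle := hk.norm_form_sub_le_of_tendstoZeroInDistrib hγ hα (hρH.continuous hγ₀) hρH
    isOpen_ball hseg hlim
  rwa [add_sub_cancel, ← hfρ' hx.1, ← hfρ' hy.1, ← dist_eq_norm'] at hle

theorem IsMollifier.locallyHolderOn_iff_tendsto_integral (hk : IsMollifier μ k 1)
    (hγ : 1 < 2 * (γ : ℝ)) (hα : LipschitzWith Λ α) (hΩ : IsOpen Ω)
    (hf : LocallyHolderOn dist γ f Ω) :
    LocallyHolderOn (fun p q => ‖α p (q - p)‖) (2 * γ) f Ω ↔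
      ∀ Φ : E → E, ContDiff ℝ (⊤ : ℕ∞) Φ → HasCompactSupport Φ → tsupport Φ ⊆ Ω →
        Tendsto (fun ε => ∫ x,
          formPullback α (rescaledKernel k ε ⋆[lsmul ℝ ℝ, μ] f) x (Φ x) ∂μ) (𝓝[>] 0) (𝓝 0) := by
  refine ⟨fun hv Φ hΦ hΦc hΦΩ => tendsto_integral_apply_of_tendstoLocallyUniformlyOn
    (hk.tendstoLocallyUniformlyOn_formPullback hγ hα hΩ hf hv) hΦ.continuous hΦc hΦΩ,
    fun h => hk.locallyHolderOn_of_tendstoZeroInDistrib hγ hα hΩ hf fun v φ hφ hφc hφΩ => ?_⟩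
  simpa using h (fun x => φ x • v) (hφ.smul contDiff_const) hφc.smul_right
    ((tsupport_smul_subset_left φ _).trans hφΩ)

end HolderMaps

section Heisenberg

variable {n m : ℕ}

/-- The symplectic part `2 ∑_j (x_j dy_j - y_j dx_j)` of the contact form, as a bilinear form. -/
noncomputable def symplecticForm (n : ℕ) :
    EuclideanSpace ℝ (Fin (2 * n + 1)) →L[ℝ] EuclideanSpace ℝ (Fin (2 * n + 1)) →L[ℝ] ℝ :=
  (2 : ℝ) • ∑ j : Fin n,
    ((EuclideanSpace.proj (xI n j)).smulRight (EuclideanSpace.proj (yI n j)) -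
      (EuclideanSpace.proj (yI n j)).smulRight (EuclideanSpace.proj (xI n j)))

theorem symplecticForm_apply (p v : EuclideanSpace ℝ (Fin (2 * n + 1))) :
    symplecticForm n p v =
      2 * ∑ j : Fin n, (p (xI n j) * v (yI n j) - p (yI n j) * v (xI n j)) := by
  simp [symplecticForm]

theorem symplecticForm_self (p : EuclideanSpace ℝ (Fin (2 * n + 1))) :
    symplecticForm n p p = 0 := by
  rw [symplecticForm_apply, Finset.sum_eq_zero fun j _ => by ring, mul_zero]

/-- The standard contact form `dt + 2 ∑_j (x_j dy_j - y_j dx_j)` of the Heisenberg group. -/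
noncomputable def contactForm (n : ℕ) (p : EuclideanSpace ℝ (Fin (2 * n + 1))) :
    EuclideanSpace ℝ (Fin (2 * n + 1)) →L[ℝ] ℝ :=
  EuclideanSpace.proj (tI n) + symplecticForm n p

theorem contactForm_apply (p v : EuclideanSpace ℝ (Fin (2 * n + 1))) :
    contactForm n p v = v (tI n) + symplecticForm n p v := rfl

theorem lipschitzWith_contactForm : LipschitzWith ‖symplecticForm n‖₊ (contactForm n) := by
  refine LipschitzWith.of_dist_le_mul fun p q => ?_
  rw [contactForm, contactForm, dist_add_left]
  exact (symplecticForm n).lipschitz.dist_le_mul p q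

theorem dK_eq_contactForm (p q : EuclideanSpace ℝ (Fin (2 * n + 1))) :
    dK n p q = ((∑ i : Fin (2 * n), (p (Fin.castSucc i) - q (Fin.castSucc i)) ^ 2) ^ 2 +
      contactForm n p (q - p) ^ 2) ^ ((1 : ℝ) / 4) := by
  rw [dK, ← neg_sq (contactForm n p _), ← map_neg, neg_sub, contactForm_apply, map_sub,
    symplecticForm_self, zero_sub, symplecticForm_apply, ← mul_neg, ← Finset.sum_neg_distrib]
  simp only [PiLp.sub_apply, neg_sub, mul_comm (q _) (p _)]

theorem dK_nonneg (p q : EuclideanSpace ℝ (Fin (2 * n + 1))) : 0 ≤ dK n p q := by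
  rw [dK]
  positivity

theorem norm_contactForm_le_dK_sq (p q : EuclideanSpace ℝ (Fin (2 * n + 1))) :
    ‖contactForm n p (q - p)‖ ≤ dK n p q ^ 2 := by
  rw [dK_eq_contactForm, ← Real.rpow_mul_natCast (by positivity), Nat.cast_ofNat,
    show (1 : ℝ) / 4 * 2 = 1 / 2 by norm_num, ← Real.sqrt_eq_rpow]
  exact Real.abs_le_sqrt (le_add_of_nonneg_left (sq_nonneg _))

theorem sum_sq_sub_le_dist_sq (p q : EuclideanSpace ℝ (Fin (2 * n + 1))) :
    ∑ i : Fin (2 * n), (p (Fin.castSucc i) - q (Fin.castSucc i)) ^ 2 ≤ dist p q ^ 2 := by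
  rw [EuclideanSpace.dist_eq, Real.sq_sqrt (by positivity), Fin.sum_univ_castSucc]
  simp only [Real.dist_eq, sq_abs]
  exact le_add_of_nonneg_right (sq_nonneg _)

theorem dK_le_of_dist_le {p q : EuclideanSpace ℝ (Fin (2 * n + 1))} {A B r : ℝ} (hr : 0 ≤ r)
    (hA : dist p q ≤ A * r) (hB : ‖contactForm n p (q - p)‖ ≤ B * r ^ 2) :
    dK n p q ≤ (A ^ 4 + B ^ 2) ^ ((1 : ℝ) / 4) * r := by
  have hr4 : r = (r ^ 4) ^ ((1 : ℝ) / 4) := by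
    simpa using (Real.pow_rpow_inv_natCast hr four_ne_zero).symm
  have hhor := pow_le_pow_left₀ (by positivity) ((sum_sq_sub_le_dist_sq p q).trans
    (pow_le_pow_left₀ dist_nonneg hA 2)) 2
  have hver := pow_le_pow_left₀ (norm_nonneg _) hB 2
  rw [Real.norm_eq_abs, sq_abs] at hver
  rw [dK_eq_contactForm]
  conv_rhs => rw [hr4, ← Real.mul_rpow (by positivity) (by positivity)]
  refine Real.rpow_le_rpow (by positivity) ?_ (by norm_num)
  linarith

theorem locallyHolderOn_dK_iff {X : Type*} [PseudoMetricSpace X] {γ : ℝ}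
    {f : X → EuclideanSpace ℝ (Fin (2 * n + 1))} {Ω : Set X} (hf : LocallyHolderOn dist γ f Ω) :
    LocallyHolderOn (dK n) γ f Ω ↔
      LocallyHolderOn (fun p q => ‖contactForm n p (q - p)‖) (2 * γ) f Ω := by
  have hsq (x y : X) : dist x y ^ (2 * γ) = (dist x y ^ γ) ^ 2 := by
    rw [mul_comm, Real.rpow_mul dist_nonneg, Real.rpow_two]
  refine ⟨fun h p hp => ?_, fun h p hp => ?_⟩
  · obtain ⟨r, hr, C, hC⟩ := h p hp
    refine ⟨r, hr, C ^ 2, fun x hx y hy => (norm_contactForm_le_dK_sq _ _).trans ?_⟩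
    rw [hsq, ← mul_pow]
    exact pow_le_pow_left₀ (dK_nonneg _ _) (hC x hx y hy) 2
  · obtain ⟨r, hr, A, hA⟩ := hf p hp
    obtain ⟨s, hs, B, hB⟩ := h p hp
    refine ⟨min r s, lt_min hr hs, (A ^ 4 + B ^ 2) ^ ((1 : ℝ) / 4), fun x hx y hy =>
      dK_le_of_dist_le (by positivity) ?_ ?_⟩
    · exact hA x ⟨ball_subset_ball (min_le_left r s) hx.1, hx.2⟩
        y ⟨ball_subset_ball (min_le_left r s) hy.1, hy.2⟩
    · rw [← hsq]
      exact hB x ⟨ball_subset_ball (min_le_right r s) hx.1, hx.2⟩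
        y ⟨ball_subset_ball (min_le_right r s) hy.1, hy.2⟩

theorem inner_gradient_apply {E : Type*} [NormedAddCommGroup E] [InnerProductSpace ℝ E]
    [CompleteSpace E] {d : ℕ} {g : E → EuclideanSpace ℝ (Fin d)} {x : E}
    (hg : DifferentiableAt ℝ g x) (i : Fin d) (v : E) :
    ⟪gradient (fun z => g z i) x, v⟫ = fderiv ℝ g x v i := by
  rw [gradient, InnerProductSpace.toDual_symm_apply]
  exact congrArg (fun L => L v)
    ((EuclideanSpace.proj (𝕜 := ℝ) i).hasFDerivAt.comp x hg.hasFDerivAt).fderiv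

theorem inner_pullA_eq_formPullback
    {g : EuclideanSpace ℝ (Fin m) → EuclideanSpace ℝ (Fin (2 * n + 1))}
    {x : EuclideanSpace ℝ (Fin m)} (hg : DifferentiableAt ℝ g x) (v : EuclideanSpace ℝ (Fin m)) :
    ⟪pullA n m g x, v⟫ = formPullback (contactForm n) g x v := by
  rw [formPullback, comp_apply, contactForm_apply, symplecticForm_apply, pullA, inner_add_left,
    real_inner_smul_left, sum_inner]
  simp only [inner_sub_left, real_inner_smul_left, inner_gradient_apply hg]

theorem mollify_eq_convolution {d : ℕ} (η : EuclideanSpace ℝ (Fin m) → ℝ) (ε : ℝ)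
    (f : EuclideanSpace ℝ (Fin m) → EuclideanSpace ℝ (Fin d)) :
    mollify m d η ε f = rescaledKernel η ε ⋆[lsmul ℝ ℝ, volume] f := by
  ext1 x
  simp only [mollify, convolution, rescaledKernel, lsmul_apply, finrank_euclideanSpace_fin]

theorem IsMollifier.integral_inner_pullA_mollify_eventuallyEq {γ : ℝ≥0}
    {f : EuclideanSpace ℝ (Fin m) → EuclideanSpace ℝ (Fin (2 * n + 1))}
    {Ω : Set (EuclideanSpace ℝ (Fin m))} {η : EuclideanSpace ℝ (Fin m) → ℝ}
    (hη : IsMollifier volume η 1) (hγ : 0 < γ) (hΩ : IsOpen Ω) (hf : LocallyHolderOn dist γ f Ω)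
    {Φ : EuclideanSpace ℝ (Fin m) → EuclideanSpace ℝ (Fin m)} (hΦ : HasCompactSupport Φ)
    (hΦΩ : tsupport Φ ⊆ Ω) :
    (fun ε => ∫ x, ⟪pullA n m (mollify m (2 * n + 1) η ε f) x, Φ x⟫) =ᶠ[𝓝[>] 0] fun ε =>
      ∫ x, formPullback (contactForm n) (rescaledKernel η ε ⋆[lsmul ℝ ℝ, volume] f) x (Φ x) := by
  simp only [mollify_eq_convolution]
  refine eventuallyEq_integral_of_isCompact hΦ (fun x hx => ?_) fun ε x hx => ?_
  · filter_upwards [hη.eventually_differentiableAt_convolution hγ hΩ hf (hΦΩ hx)] with q hq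
    exact inner_pullA_eq_formPullback hq _
  · rw [image_eq_zero_of_notMem_tsupport hx, inner_zero_right, map_zero]

end Heisenberg

/-- Theorem 8.4 of the paper. A locally `γ`-Hölder map
`f : Ω → ℝ^{2n+1}`, `1/2 < γ ≤ 1`, is locally `γ`-Hölder into `ℍ^n` iff `f^*α = 0` in the
distributional sense. -/
theorem stmt8 (m n : ℕ) (γ : ℝ) (hγ : 1/2 < γ) (hγ1 : γ ≤ 1)
    (Ω : Set (EuclideanSpace ℝ (Fin m))) (hΩ : IsOpen Ω)
    (f : EuclideanSpace ℝ (Fin m) → EuclideanSpace ℝ (Fin (2*n+1)))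
    (hf : ∀ p ∈ Ω, ∃ r : ℝ, 0 < r ∧ ∃ C : ℝ, ∀ x ∈ ball p r ∩ Ω, ∀ y ∈ ball p r ∩ Ω,
        dist (f x) (f y) ≤ C * dist x y ^ γ)
    (η : EuclideanSpace ℝ (Fin m) → ℝ)
    (hη₁ : ContDiff ℝ (⊤ : ℕ∞) η) (hη₂ : Function.support η ⊆ closedBall 0 1)
    (hη₃ : ∀ z, 0 ≤ η z) (hη₄ : ∫ z, η z = 1) :
    (∀ p ∈ Ω, ∃ r : ℝ, 0 < r ∧ ∃ C : ℝ, ∀ x ∈ ball p r ∩ Ω, ∀ y ∈ ball p r ∩ Ω,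
        dK n (f x) (f y) ≤ C * dist x y ^ γ)
    ↔
    (∀ Φ : EuclideanSpace ℝ (Fin m) → EuclideanSpace ℝ (Fin m),
      ContDiff ℝ (⊤ : ℕ∞) Φ → HasCompactSupport Φ → tsupport Φ ⊆ Ω →
      Filter.Tendsto
        (fun ε : ℝ => ∫ x, ⟪pullA n m (mollify m (2*n+1) η ε f) x, Φ x⟫)
        (nhdsWithin 0 (Set.Ioi 0)) (nhds 0)) := by
  lift γ to ℝ≥0 using by linarith
  have hη := IsMollifier.of_support_subset_closedBall hη₁ one_ne_zero hη₂ hη₃ hη₄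
  change LocallyHolderOn dist γ f Ω at hf
  change LocallyHolderOn (dK n) γ f Ω ↔ _
  rw [locallyHolderOn_dK_iff hf, hη.locallyHolderOn_iff_tendsto_integral (by linarith)
    lipschitzWith_contactForm hΩ hf]
  refine forall₄_congr fun Φ _ hΦ hΦΩ => tendsto_congr' (EventuallyEq.symm ?_)
  exact hη.integral_inner_pullA_mollify_eventuallyEq (NNReal.coe_pos.1 (by linarith)) hΩ hf hΦ hΦΩ
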